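/- Let m, K ≥ 1, let C ∈ ℝ^{m×K} be a cost matrix, let ε > 0, and set μ = (1/m)·1_m. Then the matrix T* with entries T*_{ij} = (1/m)·exp(−C_{ij}/ε) / Σ_{k=1}^K exp(−C_{ik}/ε) is the unique minimizer of the objective ⟨C, T⟩ − ε·H(T) over the set U(μ) = { T ∈ ℝ_{+}^{m×K} : T·1_K = μ }. -/

import Mathlib

open Finset

/-- The candidate optimal entropic transport plan
`T*_{ij} = (1/m)·exp(-C_{ij}/ε) / Σ_k exp(-C_{ik}/ε)`. -/
noncomputable def Tstar (m K : ℕ) (C : Fin m → Fin K → ℝ) (ε : ℝ) :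
    Fin m → Fin K → ℝ :=
  fun i j => (1 / (m : ℝ)) * Real.exp (-C i j / ε) / ∑ k, Real.exp (-C i k / ε)

/-- The entropic optimal transport objective `⟨C, T⟩ - ε·H(T)`, where
`H(T) = Σ_{ij} (1 - log T_{ij})·T_{ij}` (with `0·(1 - log 0) = 0` via `Real.log 0 = 0`). -/
noncomputable def entObj (m K : ℕ) (C : Fin m → Fin K → ℝ) (ε : ℝ)
    (T : Fin m → Fin K → ℝ) : ℝ :=
  (∑ i, ∑ j, C i j * T i j) - ε * ∑ i, ∑ j, (1 - Real.log (T i j)) * T i j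

/-!
The objective and the constraints decouple over the rows of `T`. On one row, a Gibbs weight `q` of
total mass `a` satisfies `c = -ε log q + const`, so that on vectors `t` of mass `a` the objective is
`ε ∑ (t log t - t log q)` up to a constant. The Gibbs inequality says that this
Kullback-Leibler divergence is positive unless `t = q`.
-/

section GibbsInequality

lemma sub_lt_mul_log_sub_mul_log {x y : ℝ} (hx : 0 ≤ x) (hy : 0 < y) (hxy : x ≠ y) :
    x - y < x * Real.log x - x * Real.log y := by
  rcases hx.eq_or_lt with rfl | hx
  · simpa using hy
  have hratio : x / y - 1 < x / y * Real.log (x / y) :=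
    Real.self_sub_one_lt_mul_log (by positivity) (div_ne_one_of_ne hxy)
  calc x - y = y * (x / y - 1) := by field_simp
    _ < y * (x / y * Real.log (x / y)) := by gcongr
    _ = x * Real.log x - x * Real.log y := by
      rw [Real.log_div hx.ne' hy.ne']
      field_simp

lemma sum_mul_log_lt_sum_mul_log {κ : Type*} [Fintype κ] {t q : κ → ℝ}
    (ht : ∀ j, 0 ≤ t j) (hq : ∀ j, 0 ≤ q j) (hac : ∀ j, q j = 0 → t j = 0)
    (hsum : ∑ j, t j = ∑ j, q j) (hne : t ≠ q) :
    ∑ j, t j * Real.log (q j) < ∑ j, t j * Real.log (t j) := by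
  have hlt (j : κ) (hj : t j ≠ q j) :
      t j - q j < t j * Real.log (t j) - t j * Real.log (q j) := by
    have hqj : q j ≠ 0 := fun h => hj (by rw [hac j h, h])
    exact sub_lt_mul_log_sub_mul_log (ht j) ((hq j).lt_of_ne' hqj) hj
  have hle (j : κ) : t j - q j ≤ t j * Real.log (t j) - t j * Real.log (q j) := by
    rcases eq_or_ne (t j) (q j) with hj | hj
    · simp only [hj, sub_self, le_refl]
    · exact (hlt j hj).le
  obtain ⟨j, hj⟩ := Function.ne_iff.mp hne
  have hlt_sum := sum_lt_sum (fun j _ => hle j) ⟨j, mem_univ j, hlt j hj⟩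
  rwa [sum_sub_distrib, sum_sub_distrib, hsum, sub_self, sub_pos] at hlt_sum

end GibbsInequality

section GibbsWeight

variable {κ : Type*} [Fintype κ]

/-- The Gibbs (softmax) weight of total mass `a` for the cost vector `c` at temperature `ε`: a row
of the optimal plan. -/
noncomputable def gibbsWeight (a : ℝ) (c : κ → ℝ) (ε : ℝ) : κ → ℝ :=
  fun j => a * Real.exp (-c j / ε) / ∑ k, Real.exp (-c k / ε)

/-- The entropy-regularized cost `⟨c, t⟩ - ε·H(t)` of a nonnegative vector `t`, where
`H(t) = ∑ (1 - log t_j)·t_j`: the contribution of one row to the transport objective. -/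
noncomputable def freeEnergy (c : κ → ℝ) (ε : ℝ) (t : κ → ℝ) : ℝ :=
  ∑ j, c j * t j - ε * ∑ j, (1 - Real.log (t j)) * t j

variable {a ε : ℝ} {c t : κ → ℝ}

lemma gibbsWeight_nonneg (ha : 0 ≤ a) (j : κ) : 0 ≤ gibbsWeight a c ε j := by
  unfold gibbsWeight
  positivity

lemma gibbsWeight_zero : gibbsWeight 0 c ε = 0 := by
  ext j
  simp [gibbsWeight]

lemma sum_exp_pos [Nonempty κ] (f : κ → ℝ) : 0 < ∑ k, Real.exp (f k) :=
  sum_pos (fun _ _ => Real.exp_pos _) univ_nonempty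

lemma gibbsWeight_pos (ha : 0 < a) (j : κ) : 0 < gibbsWeight a c ε j :=
  have : Nonempty κ := ⟨j⟩
  div_pos (mul_pos ha (Real.exp_pos _)) (sum_exp_pos _)

lemma sum_gibbsWeight [Nonempty κ] (a : ℝ) (c : κ → ℝ) (ε : ℝ) :
    ∑ j, gibbsWeight a c ε j = a := by
  simp only [gibbsWeight]
  rw [← sum_div, ← mul_sum, mul_div_cancel_right₀ _ (sum_exp_pos _).ne']

lemma log_gibbsWeight (ha : a ≠ 0) (j : κ) :
    Real.log (gibbsWeight a c ε j) =
      Real.log a - c j / ε - Real.log (∑ k, Real.exp (-c k / ε)) := by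
  have : Nonempty κ := ⟨j⟩
  rw [gibbsWeight, Real.log_div (mul_ne_zero ha (Real.exp_ne_zero _)) (sum_exp_pos _).ne',
    Real.log_mul ha (Real.exp_ne_zero _), Real.log_exp]
  ring

lemma freeEnergy_eq_add_const (ha : a ≠ 0) (hε : ε ≠ 0) (hsum : ∑ j, t j = a) :
    freeEnergy c ε t =
      ε * (∑ j, t j * Real.log (t j) - ∑ j, t j * Real.log (gibbsWeight a c ε j)) +
        ε * (Real.log a - Real.log (∑ k, Real.exp (-c k / ε)) - 1) * a := by
  set b := Real.log a - Real.log (∑ k, Real.exp (-c k / ε)) with hb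
  have hcost (j : κ) : c j = ε * (b - Real.log (gibbsWeight a c ε j)) := by
    rw [log_gibbsWeight ha, hb]
    field_simp
    ring
  calc freeEnergy c ε t
      = ∑ j, (c j * t j - ε * ((1 - Real.log (t j)) * t j)) := by
        rw [freeEnergy, mul_sum, sum_sub_distrib]
    _ = ∑ j, (ε * (t j * Real.log (t j) - t j * Real.log (gibbsWeight a c ε j)) +
          ε * (b - 1) * t j) := by
        refine sum_congr rfl fun j _ => ?_
        rw [hcost j]
        ring
    _ = _ := by rw [sum_add_distrib, ← mul_sum, ← mul_sum, sum_sub_distrib, hsum]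

theorem freeEnergy_gibbsWeight_lt (ha : 0 ≤ a) (hε : 0 < ε) (ht : ∀ j, 0 ≤ t j)
    (hsum : ∑ j, t j = a) (hne : t ≠ gibbsWeight a c ε) :
    freeEnergy c ε (gibbsWeight a c ε) < freeEnergy c ε t := by
  obtain ⟨j₀, -⟩ := Function.ne_iff.mp hne
  have : Nonempty κ := ⟨j₀⟩
  rcases ha.eq_or_lt with rfl | ha
  · have ht_zero : t = 0 := (Fintype.sum_eq_zero_iff_of_nonneg ht).mp hsum
    exact absurd (ht_zero.trans gibbsWeight_zero.symm) hne
  have hgibbs : ∑ j, t j * Real.log (gibbsWeight a c ε j) < ∑ j, t j * Real.log (t j) :=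
    sum_mul_log_lt_sum_mul_log ht (gibbsWeight_nonneg ha.le)
      (fun j hj => absurd hj (gibbsWeight_pos ha j).ne')
      (hsum.trans (sum_gibbsWeight a c ε).symm) hne
  rw [freeEnergy_eq_add_const ha.ne' hε.ne' hsum,
    freeEnergy_eq_add_const ha.ne' hε.ne' (sum_gibbsWeight a c ε), sub_self, mul_zero]
  gcongr
  exact mul_pos hε (sub_pos.mpr hgibbs)

end GibbsWeight

section TransportPlan

variable {ι κ : Type*} [Fintype ι] [Fintype κ]

/-- The transport plan whose `i`-th row is the Gibbs weight of mass `μ i` for the costs `C i`;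
`Tstar` is the case of uniform `μ`. -/
noncomputable def gibbsPlan (μ : ι → ℝ) (C : ι → κ → ℝ) (ε : ℝ) : ι → κ → ℝ :=
  fun i => gibbsWeight (μ i) (C i) ε

/-- The entropic transport objective `⟨C, T⟩ - ε·H(T)` for plans between arbitrary finite types,
generalizing `entObj`. -/
noncomputable def entropicCost (C : ι → κ → ℝ) (ε : ℝ) (T : ι → κ → ℝ) : ℝ :=
  (∑ i, ∑ j, C i j * T i j) - ε * ∑ i, ∑ j, (1 - Real.log (T i j)) * T i j

lemma entropicCost_eq_sum_freeEnergy (C : ι → κ → ℝ) (ε : ℝ) (T : ι → κ → ℝ) :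
    entropicCost C ε T = ∑ i, freeEnergy (C i) ε (T i) := by
  simp only [entropicCost, freeEnergy, sum_sub_distrib, mul_sum]

theorem entropicCost_gibbsPlan_lt {μ : ι → ℝ} (hμ : ∀ i, 0 ≤ μ i) {C : ι → κ → ℝ} {ε : ℝ}
    (hε : 0 < ε) {T : ι → κ → ℝ} (hT : ∀ i j, 0 ≤ T i j) (hsum : ∀ i, ∑ j, T i j = μ i)
    (hne : T ≠ gibbsPlan μ C ε) :
    entropicCost C ε (gibbsPlan μ C ε) < entropicCost C ε T := by
  have hlt (i : ι) (hi : T i ≠ gibbsPlan μ C ε i) :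
      freeEnergy (C i) ε (gibbsPlan μ C ε i) < freeEnergy (C i) ε (T i) :=
    freeEnergy_gibbsWeight_lt (hμ i) hε (hT i) (hsum i) hi
  have hle (i : ι) : freeEnergy (C i) ε (gibbsPlan μ C ε i) ≤ freeEnergy (C i) ε (T i) := by
    rcases eq_or_ne (T i) (gibbsPlan μ C ε i) with hi | hi
    · rw [hi]
    · exact (hlt i hi).le
  obtain ⟨i, hi⟩ := Function.ne_iff.mp hne
  simp only [entropicCost_eq_sum_freeEnergy]
  exact sum_lt_sum (fun i _ => hle i) ⟨i, mem_univ i, hlt i hi⟩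

theorem stmt3_general [Nonempty κ] {μ : ι → ℝ} (hμ : ∀ i, 0 ≤ μ i) (C : ι → κ → ℝ) {ε : ℝ}
    (hε : 0 < ε) :
    (∀ i j, 0 ≤ gibbsPlan μ C ε i j) ∧
    (∀ i, ∑ j, gibbsPlan μ C ε i j = μ i) ∧
    (∀ T : ι → κ → ℝ,
      (∀ i j, 0 ≤ T i j) → (∀ i, ∑ j, T i j = μ i) →
      T ≠ gibbsPlan μ C ε →
      entropicCost C ε (gibbsPlan μ C ε) < entropicCost C ε T) :=
  ⟨fun i => gibbsWeight_nonneg (hμ i), fun i => sum_gibbsWeight (μ i) (C i) ε,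
    fun _ => entropicCost_gibbsPlan_lt hμ hε⟩

end TransportPlan

/-- `T*` is the unique minimizer of `⟨C, T⟩ - ε·H(T)` over
`U(μ) = {T ∈ ℝ₊^{m×K} : T·1_K = (1/m)·1_m}`. -/
theorem stmt3 (m K : ℕ) (hm : 1 ≤ m) (hK : 1 ≤ K)
    (C : Fin m → Fin K → ℝ) (ε : ℝ) (hε : 0 < ε) :
    (∀ i j, 0 ≤ Tstar m K C ε i j) ∧
    (∀ i, ∑ j, Tstar m K C ε i j = 1 / (m : ℝ)) ∧
    (∀ T : Fin m → Fin K → ℝ,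
      (∀ i j, 0 ≤ T i j) → (∀ i, ∑ j, T i j = 1 / (m : ℝ)) →
      T ≠ Tstar m K C ε →
      entObj m K C ε (Tstar m K C ε) < entObj m K C ε T) := by
  have : Nonempty (Fin K) := Fin.pos_iff_nonempty.mp hK
  exact stmt3_general (μ := fun _ => 1 / (m : ℝ)) (fun _ => by positivity) C hε
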